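/- There exists ε₀ > 0 such that for all 0 < ε ≤ ε₀ the following hold. (i) If λ ∈ ℝ and u ∈ C²([0,1]) is a nonzero function satisfying φ₂u'' + φ₁u' = λu on [0,1], then ∫_{x₀}^{1−x₀} w(x)|u(x)|² dx > 0 and λ = (∫_{x₀}^{1−x₀} p(x)|u'(x)|² dx)/(∫_{x₀}^{1−x₀} w(x)|u(x)|² dx); in particular λ ≥ 0. (ii) λ = 0 admits a nonzero C²([0,1]) solution, and every C²([0,1]) solution of φ₂u'' + φ₁u' = 0 on [0,1] is constant. -/

import Mathlib

open Real Set Filter Topology MeasureTheory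

/-- The degenerate point `x₀ = (2 − √3)ε`. -/
noncomputable def x0 (ε : ℝ) : ℝ := (2 - Real.sqrt 3) * ε

/-- Leading coefficient `φ₂` of `D_ε` on the interval. -/
noncomputable def phi2 (ε x : ℝ) : ℝ :=
  if x ≤ ε then (1/12) * (1 - 4*(x/ε) + (x/ε)^2)
  else if x ≤ 1 - ε then -(1/6)
  else (1/12) * (1 - 4*((1-x)/ε) + ((1-x)/ε)^2)

/-- First-order coefficient `φ₁` of `D_ε` on the interval. -/
noncomputable def phi1 (ε x : ℝ) : ℝ :=
  if x ≤ ε then -6 * (1 - x/ε) * ((1 + x/ε)^3)⁻¹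
  else if x ≤ 1 - ε then 0
  else 6 * (1 - (1-x)/ε) * ((1 + (1-x)/ε)^3)⁻¹

/-- Integration-factor function `g` on `[0, ε]`. -/
noncomputable def gfun (ε x : ℝ) : ℝ :=
  Real.sign (x - x0 ε) * |x - x0 ε| ^ ((4 + 2*Real.sqrt 3) * ε) *
    |x - 4*ε + x0 ε| ^ ((4 - 2*Real.sqrt 3) * ε) *
    (x + ε) ^ (-(8*ε)) *
    Real.exp (12*ε^3/(ε+x)^2 + 12*ε^2/(ε+x))

/-- Sturm–Liouville principal coefficient `p`. -/
noncomputable def pfun (ε x : ℝ) : ℝ :=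
  if x ≤ ε then gfun ε x / (6 * gfun ε ε)
  else if x ≤ 1 - ε then 1/6
  else gfun ε (1-x) / (6 * gfun ε ε)

/-- Sturm–Liouville weight `w = -p/φ₂`. -/
noncomputable def wfun (ε x : ℝ) : ℝ := -pfun ε x / phi2 ε x

/-!
By partial fractions `g' / g = φ₁ / φ₂`, so `p` is an integrating factor and the equation reads
`(p u')' = -λ w u` on `(x₀, 1 - x₀)`. As `p` vanishes at both ends, multiplying by `u` and
integrating by parts gives `∫ p u'² = λ ∫ w u²`, where `p` and `w` are positive inside.

It remains to see that a solution vanishing on `(x₀, 1 - x₀)` vanishes on all of `[0, 1]`. By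
continuity `u = u' = 0` at the singular point `x₀`, and to its left the equation has the form
`t v'' + c v' = k v` in `t = x₀ - x`. Since `φ₁ ≤ 0` there, the singular damping `c / t` has the
good sign, and a Gronwall argument applied to `v'²` forces `v = 0`; the right end follows by
reflection.

If `λ = 0`, the identity makes `u` constant on `(x₀, 1 - x₀)`, and the same continuation applied to
`u` minus that constant makes it constant on `[0, 1]`.
-/

theorem intervalIntegral_pos_of_continuousOn_Ioo {a b z : ℝ} {f : ℝ → ℝ} (hz : z ∈ Ioo a b)
    (hcont : ContinuousOn f (Ioo a b)) (hint : IntervalIntegrable f volume a b)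
    (hnonneg : ∀ x ∈ Ioo a b, 0 ≤ f x) (hfz : f z ≠ 0) : 0 < ∫ x in a..b, f x := by
  have hab : a < b := hz.1.trans hz.2
  have hae : 0 ≤ᵐ[volume.restrict (uIoc a b)] f := by
    rw [uIoc_of_le hab.le, ← restrict_Ioo_eq_restrict_Ioc]
    exact ae_restrict_of_forall_mem measurableSet_Ioo hnonneg
  rw [intervalIntegral.integral_pos_iff_support_of_nonneg_ae' hae hint]
  have hopen : IsOpen (Ioo a b ∩ Function.support f) :=
    hcont.isOpen_inter_preimage isOpen_Ioo isOpen_ne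
  refine ⟨hab, (hopen.measure_pos volume ⟨z, hz, hfz⟩).trans_le (measure_mono ?_)⟩
  exact fun x hx => ⟨hx.2, Ioo_subset_Ioc_self hx.1⟩

theorem integral_mul_deriv_sq_eq_of_sturmLiouville {a b lam : ℝ} {p w u u' : ℝ → ℝ} {s : Set ℝ}
    (hab : a ≤ b) (hs : s.Countable) (hp : ContinuousOn p (Icc a b)) (hpa : p a = 0) (hpb : p b = 0)
    (hw : IntervalIntegrable w volume a b) (hu : ContinuousOn u (Icc a b))
    (hu' : ContinuousOn u' (Icc a b)) (hderiv : ∀ x ∈ Ioo a b, HasDerivAt u (u' x) x)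
    (hSL : ∀ x ∈ Ioo a b \ s, HasDerivAt (fun y => p y * u' y) (-(lam * (w x * u x))) x) :
    ∫ x in a..b, p x * u' x ^ 2 = lam * ∫ x in a..b, w x * u x ^ 2 := by
  have hpu : IntervalIntegrable (fun x => p x * u' x ^ 2) volume a b :=
    (hp.mul (hu'.pow 2)).intervalIntegrable_of_Icc hab
  have hwu : IntervalIntegrable (fun x => lam * (w x * u x ^ 2)) volume a b :=
    (hw.mul_continuousOn (by rw [uIcc_of_le hab]; exact hu.pow 2)).const_mul lam
  have hflux : ∀ x ∈ Ioo a b \ s, HasDerivAt (fun y => p y * u' y * u y)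
      (p x * u' x ^ 2 - lam * (w x * u x ^ 2)) x := fun x hx =>
    ((hSL x hx).mul (hderiv x hx.1)).congr_deriv (by ring)
  have hparts := integral_eq_of_hasDerivAt_off_countable_of_le _ _ hab hs
    ((hp.mul hu').mul hu) hflux (hpu.sub hwu)
  rw [intervalIntegral.integral_sub hpu hwu, intervalIntegral.integral_const_mul,
    Pi.mul_apply, Pi.mul_apply, Pi.mul_apply, Pi.mul_apply, hpa, hpb] at hparts
  linarith

theorem sq_div_le_of_forall_sq_deriv_le {t C : ℝ} {v v' : ℝ → ℝ} (ht : 0 < t)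
    (hcont : ContinuousOn v (Icc 0 t)) (hderiv : ∀ s ∈ Ioo 0 t, HasDerivAt v (v' s) s)
    (hv0 : v 0 = 0) (hC : ∀ s ∈ Ioo 0 t, v' s ^ 2 ≤ C) : (v t / t) ^ 2 ≤ C := by
  obtain ⟨s, hs, hslope⟩ := exists_hasDerivAt_eq_slope v v' ht hcont hderiv
  have hquot : v t / t = v' s := by rw [hslope, hv0, sub_zero, sub_zero]
  exact hquot ▸ hC s hs

theorem two_mul_mul_le_of_singular_ode {t c k L A v v' v'' : ℝ} (ht : 0 < t) (hc : 0 ≤ c)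
    (hk : |k| ≤ L) (hode : t * v'' + c * v' = k * v) (hv : (v / t) ^ 2 ≤ A) (hv' : v' ^ 2 ≤ A) :
    2 * v' * v'' ≤ 2 * L * A := by
  have hv'' : v'' = k * (v / t) - c / t * v' := by
    field_simp
    linarith
  have hdamp : 0 ≤ c / t * v' ^ 2 := by positivity
  have hcross : |v' * (v / t)| ≤ A := by
    rw [abs_le]
    constructor <;> nlinarith [sq_nonneg (v' - v / t), sq_nonneg (v' + v / t)]
  have hforce : k * (v' * (v / t)) ≤ L * A := by
    calc k * (v' * (v / t)) ≤ |k| * |v' * (v / t)| := abs_mul k _ ▸ le_abs_self _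
      _ ≤ L * A := mul_le_mul hk hcross (abs_nonneg _) ((abs_nonneg k).trans hk)
  calc 2 * v' * v'' = 2 * (k * (v' * (v / t))) - 2 * (c / t * v' ^ 2) := by rw [hv'']; ring
    _ ≤ 2 * L * A := by linarith

/- Maximising `exp (-2 * M * t) * F t` instead of `F` turns the running bound into a contraction by
the factor `1/2` on the whole interval at once, so no continuation argument is needed. -/
theorem eqOn_zero_of_deriv_le_mul_running_bound {a b M : ℝ} {F F' : ℝ → ℝ} (hM : 0 ≤ M)
    (hcont : ContinuousOn F (Icc a b)) (hderiv : ∀ t ∈ Ioo a b, HasDerivAt F (F' t) t)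
    (hnonneg : ∀ t ∈ Icc a b, 0 ≤ F t) (hFa : F a = 0)
    (hle : ∀ t ∈ Ioo a b, ∀ A, (∀ s ∈ Icc a t, F s ≤ A) → F' t ≤ M * A) :
    EqOn F 0 (Icc a b) := by
  intro t₀ ht₀
  have hab : a ≤ b := ht₀.1.trans ht₀.2
  obtain ⟨τ, hτ, hmax⟩ := isCompact_Icc.exists_isMaxOn (nonempty_Icc.2 hab)
    (show ContinuousOn (fun t => exp (-(2 * M * t)) * F t) (Icc a b) by fun_prop)
  set S := exp (-(2 * M * τ)) * F τ with hS
  have hS0 : 0 ≤ S := mul_nonneg (exp_pos _).le (hnonneg τ hτ)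
  have hbound : ∀ t ∈ Icc a b, F t ≤ S * exp (2 * M * t) := fun t ht => by
    have : exp (-(2 * M * t)) * F t ≤ S := hmax ht
    rwa [exp_neg, inv_mul_le_iff₀ (exp_pos _), mul_comm] at this
  have hderivG : ∀ t ∈ Ioo a b, HasDerivAt (fun t => F t - S / 2 * exp (2 * M * t))
      (F' t - M * (S * exp (2 * M * t))) t := fun t ht =>
    ((hderiv t ht).sub ((((hasDerivAt_id t).const_mul (2 * M)).exp).const_mul (S / 2))).congr_deriv
      (by simp only [id]; ring)
  have hanti : AntitoneOn (fun t => F t - S / 2 * exp (2 * M * t)) (Icc a b) := by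
    refine antitoneOn_of_hasDerivWithinAt_nonpos (convex_Icc a b) (by fun_prop)
      (fun t ht => (hderivG t (interior_Icc.subset ht)).hasDerivWithinAt) fun t ht => ?_
    rw [interior_Icc] at ht
    refine sub_nonpos.2 (hle t ht _ fun s hs => (hbound s ⟨hs.1, hs.2.trans ht.2.le⟩).trans ?_)
    gcongr
    exact hs.2
  have hcontraction : F τ ≤ S / 2 * exp (2 * M * τ) - S / 2 * exp (2 * M * a) := by
    have := hanti (left_mem_Icc.2 hab) hτ hτ.1
    simp only [hFa] at this
    linarith
  have hτS : F τ = S * exp (2 * M * τ) := by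
    rw [hS, exp_neg]
    field_simp
  have hSzero : S = 0 := by nlinarith [exp_pos (2 * M * τ), exp_pos (2 * M * a)]
  exact (by simpa [hSzero] using hbound t₀ ht₀ : F t₀ ≤ 0).antisymm (hnonneg t₀ ht₀)

theorem eqOn_zero_of_singular_ode {T L : ℝ} {v v' v'' c k : ℝ → ℝ} (hT : 0 < T)
    (hv : ContinuousOn v (Icc 0 T)) (hv' : ContinuousOn v' (Icc 0 T))
    (hderiv : ∀ t ∈ Ioo 0 T, HasDerivAt v (v' t) t)
    (hderiv' : ∀ t ∈ Ioo 0 T, HasDerivAt v' (v'' t) t)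
    (hc : ∀ t ∈ Ioo 0 T, 0 ≤ c t) (hk : ∀ t ∈ Ioo 0 T, |k t| ≤ L)
    (hode : ∀ t ∈ Ioo 0 T, t * v'' t + c t * v' t = k t * v t)
    (hv0 : v 0 = 0) (hv'0 : v' 0 = 0) : EqOn v 0 (Icc 0 T) := by
  have hL : 0 ≤ L := (abs_nonneg _).trans (hk (T / 2) ⟨by linarith, by linarith⟩)
  have hquot : ∀ t ∈ Ioc 0 T, ∀ A, (∀ s ∈ Icc 0 t, v' s ^ 2 ≤ A) → (v t / t) ^ 2 ≤ A :=
    fun t ht A hA => sq_div_le_of_forall_sq_deriv_le ht.1 (hv.mono (Icc_subset_Icc_right ht.2))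
      (fun s hs => hderiv s ⟨hs.1, hs.2.trans_le ht.2⟩) hv0
      fun s hs => hA s (Ioo_subset_Icc_self hs)
  have hderiv_zero : EqOn (fun t => v' t ^ 2) 0 (Icc 0 T) := by
    refine eqOn_zero_of_deriv_le_mul_running_bound (F' := fun t => 2 * v' t * v'' t)
      (mul_nonneg zero_le_two hL) (hv'.pow 2)
      (fun t ht => ((hderiv' t ht).pow 2).congr_deriv (by norm_num))
      (fun t _ => sq_nonneg _) (by simp [hv'0]) fun t ht A hA => ?_
    exact two_mul_mul_le_of_singular_ode ht.1 (hc t ht) (hk t ht) (hode t ht)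
      (hquot t (Ioo_subset_Ioc_self ht) A hA) (hA t (right_mem_Icc.2 ht.1.le))
  intro t ht
  rcases ht.1.eq_or_lt with rfl | ht0
  · exact hv0
  · have hsq : (v t / t) ^ 2 ≤ 0 :=
      hquot t ⟨ht0, ht.2⟩ 0 fun s hs => (hderiv_zero ⟨hs.1, hs.2.trans ht.2⟩).le
    simpa [ht0.ne'] using pow_eq_zero_iff two_ne_zero |>.1 (hsq.antisymm (sq_nonneg _))

section Coefficients

variable {ε x : ℝ}

theorem x0_pos (hε : 0 < ε) : 0 < x0 ε := by
  have : √3 < 2 := by rw [Real.sqrt_lt' (by norm_num)]; norm_num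
  exact mul_pos (by linarith) hε

theorem x0_lt_self (hε : 0 < ε) : x0 ε < ε := by
  have : 1 < √3 := by rw [Real.lt_sqrt (by norm_num)]; norm_num
  exact mul_lt_of_lt_one_left hε (by linarith)

theorem Icc_x0_subset_Icc (hε : 0 < ε) : Icc (x0 ε) (1 - x0 ε) ⊆ Icc 0 1 :=
  Icc_subset_Icc (x0_pos hε).le (by linarith [x0_pos hε])

theorem x0_sub_mul_sub (ε x : ℝ) :
    (x0 ε - x) * (4 * ε - x0 ε - x) = x ^ 2 - 4 * ε * x + ε ^ 2 := by
  have : √3 ^ 2 = 3 := Real.sq_sqrt (by norm_num)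
  unfold x0
  linear_combination -ε ^ 2 * this

/-- The distance from `x` to the boundary of `[0, 1]`, truncated at `ε`. The coefficients `φ₂` and
`p` depend on `x` only through it, which reduces their study to the left layer `x ≤ ε`. -/
noncomputable def edgeDist (ε x : ℝ) : ℝ := min ε (min x (1 - x))

theorem edgeDist_le (ε x : ℝ) : edgeDist ε x ≤ ε := min_le_left _ _

theorem edgeDist_one_sub (ε x : ℝ) : edgeDist ε (1 - x) = edgeDist ε x := by
  rw [edgeDist, sub_sub_cancel, min_comm (1 - x), edgeDist]

theorem continuous_edgeDist (ε : ℝ) : Continuous (edgeDist ε) := by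
  unfold edgeDist
  fun_prop

theorem edgeDist_mem_Icc (hε : 0 < ε) (hx : x ∈ Icc (x0 ε) (1 - x0 ε)) :
    edgeDist ε x ∈ Icc (x0 ε) ε :=
  ⟨le_min (x0_lt_self hε).le (le_min hx.1 (by linarith [hx.2])), edgeDist_le ε x⟩

theorem edgeDist_mem_Ioc (hε : 0 < ε) (hx : x ∈ Ioo (x0 ε) (1 - x0 ε)) :
    edgeDist ε x ∈ Ioc (x0 ε) ε :=
  ⟨lt_min (x0_lt_self hε) (lt_min hx.1 (by linarith [hx.2])), edgeDist_le ε x⟩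

theorem ite_eq_comp_edgeDist {f : ℝ → ℝ} (hε : ε < 1 / 2) :
    (if x ≤ ε then f x else if x ≤ 1 - ε then f ε else f (1 - x)) = f (edgeDist ε x) := by
  unfold edgeDist
  split_ifs with hleft hmid
  · rw [min_eq_left (by linarith : x ≤ 1 - x), min_eq_right hleft]
  · rw [min_eq_left (le_min (by linarith) (by linarith))]
  · rw [min_eq_right (by linarith : 1 - x ≤ x), min_eq_right (by linarith)]

theorem phi2_of_le (hε : 0 < ε) (hx : x ≤ ε) :
    phi2 ε x = (x0 ε - x) * (4 * ε - x0 ε - x) / (12 * ε ^ 2) := by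
  rw [phi2, if_pos hx, x0_sub_mul_sub]
  field_simp
  ring

theorem phi2_eq_edgeDist (hε : 0 < ε) (hε' : ε < 1 / 2) (x : ℝ) :
    phi2 ε x = phi2 ε (edgeDist ε x) := by
  rw [← ite_eq_comp_edgeDist (f := phi2 ε) hε']
  grind [phi2]

theorem x0_sub_le_mul_phi2 (hε : 0 < ε) (hx : x ≤ x0 ε) : x0 ε - x ≤ 6 * ε * phi2 ε x := by
  have hx0ε := x0_lt_self hε
  calc x0 ε - x = (x0 ε - x) * (2 * ε) / (2 * ε) := by field_simp
    _ ≤ (x0 ε - x) * (4 * ε - x0 ε - x) / (2 * ε) := by gcongr; linarith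
    _ = 6 * ε * phi2 ε x := by
        rw [phi2_of_le hε (hx.trans hx0ε.le)]
        field_simp
        ring

theorem phi2_pos (hε : 0 < ε) (hx : x < x0 ε) : 0 < phi2 ε x :=
  pos_of_mul_pos_right ((sub_pos.2 hx).trans_le (x0_sub_le_mul_phi2 hε hx.le)) (by positivity)

theorem continuous_phi2 (hε : 0 < ε) (hε' : ε < 1 / 2) : Continuous (phi2 ε) := by
  have hfactor : phi2 ε = fun x =>
      (x0 ε - edgeDist ε x) * (4 * ε - x0 ε - edgeDist ε x) / (12 * ε ^ 2) :=
    funext fun x => by rw [phi2_eq_edgeDist hε hε', phi2_of_le hε (edgeDist_le ε x)]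
  have := continuous_edgeDist ε
  rw [hfactor]
  fun_prop

theorem phi2_neg (hε : 0 < ε) (hε' : ε < 1 / 2) (hx : x ∈ Ioo (x0 ε) (1 - x0 ε)) :
    phi2 ε x < 0 := by
  obtain ⟨hlt, hle⟩ := edgeDist_mem_Ioc hε hx
  rw [phi2_eq_edgeDist hε hε', phi2_of_le hε hle]
  exact div_neg_of_neg_of_pos
    (mul_neg_of_neg_of_pos (by linarith) (by linarith [x0_lt_self hε])) (by positivity)

theorem phi2_one_sub (hε : 0 < ε) (hε' : ε < 1 / 2) (x : ℝ) : phi2 ε (1 - x) = phi2 ε x := by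
  rw [phi2_eq_edgeDist hε hε', edgeDist_one_sub, ← phi2_eq_edgeDist hε hε']

theorem phi1_of_mem_Icc (hε : 0 < ε) (hx : x ∈ Icc 0 ε) :
    phi1 ε x = -6 * ε ^ 2 * (ε - x) / (ε + x) ^ 3 := by
  have hx0 : 0 ≤ x := hx.1
  rw [phi1, if_pos hx.2]
  field_simp

theorem phi1_nonpos (hε : 0 < ε) (hx : x ∈ Icc 0 ε) : phi1 ε x ≤ 0 := by
  rw [phi1_of_mem_Icc hε hx, neg_mul, neg_mul, neg_div, neg_nonpos]
  have hx0 : 0 ≤ x := hx.1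
  have hxε : 0 ≤ ε - x := sub_nonneg.2 hx.2
  positivity

theorem phi1_one_sub (hε : 0 < ε) (hε' : ε < 1 / 2) (x : ℝ) : phi1 ε (1 - x) = -phi1 ε x := by
  have hswitch : ∀ y, y = ε → 1 - y / ε = 0 := by
    rintro y rfl
    rw [div_self hε.ne', sub_self]
  simp only [phi1, sub_sub_cancel]
  split_ifs <;> first
    | ring1
    | (exfalso; linarith)
    | (rw [hswitch _ (by linarith)]; ring)

/-- The order of vanishing of `g` at `x₀`. -/
noncomputable def gOrder (ε : ℝ) : ℝ := (4 + 2 * √3) * ε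

/-- The logarithm of the regular factor of `g` at `x₀`: on `[x₀, ε]`,
`g x = (x - x₀) ^ gOrder ε * exp (gRegularLog ε x)`. -/
noncomputable def gRegularLog (ε x : ℝ) : ℝ :=
  (4 - 2 * √3) * ε * log (4 * ε - x0 ε - x) - 8 * ε * log (x + ε) +
    (12 * ε ^ 3 / (ε + x) ^ 2 + 12 * ε ^ 2 / (ε + x))

/-- The derivative of `gRegularLog ε`. -/
noncomputable def gRegularLogDeriv (ε x : ℝ) : ℝ :=
  -((4 - 2 * √3) * ε) / (4 * ε - x0 ε - x) - 8 * ε / (x + ε) +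
    (-(24 * ε ^ 3) / (ε + x) ^ 3 - 12 * ε ^ 2 / (ε + x) ^ 2)

theorem gOrder_pos (hε : 0 < ε) : 0 < gOrder ε := mul_pos (by positivity) hε

theorem gfun_x0 (ε : ℝ) : gfun ε (x0 ε) = 0 := by simp [gfun]

theorem gfun_eq_rpow_mul_exp (hε : 0 < ε) (hx : x ∈ Icc (x0 ε) ε) :
    gfun ε x = (x - x0 ε) ^ gOrder ε * exp (gRegularLog ε x) := by
  have hx0 := x0_pos hε
  have hx0ε := x0_lt_self hε
  obtain ⟨hleft, hright⟩ := hx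
  rcases hleft.eq_or_lt with rfl | hlt
  · rw [gfun_x0, sub_self, zero_rpow (gOrder_pos hε).ne', zero_mul]
  · have hfar : |x - 4 * ε + x0 ε| = 4 * ε - x0 ε - x := by
      rw [abs_of_neg (by linarith)]
      ring
    rw [gfun, gRegularLog, gOrder, Real.sign_of_pos (by linarith), one_mul,
      abs_of_pos (sub_pos.2 hlt), hfar, rpow_def_of_pos (by linarith : 0 < 4 * ε - x0 ε - x),
      rpow_def_of_pos (by linarith : 0 < x + ε), mul_assoc, mul_assoc, ← exp_add, ← exp_add]
    ring_nf

theorem hasDerivAt_gRegularLog (hx : -ε < x) (hx' : x < 4 * ε - x0 ε) :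
    HasDerivAt (gRegularLog ε) (gRegularLogDeriv ε x) x := by
  have hfar : 4 * ε - x0 ε - x ≠ 0 := by linarith
  have hpole : x + ε ≠ 0 := by linarith
  have hpole' : ε + x ≠ 0 := by linarith
  have hlogFar := ((hasDerivAt_id x).const_sub (4 * ε - x0 ε)).log hfar
  have hlogPole := ((hasDerivAt_id x).add_const ε).log hpole
  have hden : HasDerivAt (fun y => ε + y) 1 x := (hasDerivAt_id x).const_add ε
  have hrational := ((hasDerivAt_const x (12 * ε ^ 3)).div (hden.pow 2) (pow_ne_zero 2 hpole')).add
    ((hasDerivAt_const x (12 * ε ^ 2)).div hden hpole')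
  refine (((hlogFar.const_mul ((4 - 2 * √3) * ε)).sub (hlogPole.const_mul (8 * ε))).add
    hrational).congr_deriv ?_
  simp only [gRegularLogDeriv, id, Pi.pow_apply]
  field_simp
  ring

theorem continuousOn_gRegularLog (hε : 0 < ε) : ContinuousOn (gRegularLog ε) (Icc (x0 ε) ε) :=
  fun x hx => (hasDerivAt_gRegularLog (by linarith [x0_pos hε, hx.1])
    (by linarith [x0_lt_self hε, hx.2])).continuousAt.continuousWithinAt

theorem continuousOn_gfun (hε : 0 < ε) : ContinuousOn (gfun ε) (Icc (x0 ε) ε) := by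
  refine ContinuousOn.congr (ContinuousOn.mul (ContinuousOn.rpow_const (by fun_prop) ?_)
    (continuousOn_gRegularLog hε).rexp) fun x hx => gfun_eq_rpow_mul_exp hε hx
  exact fun x _ => Or.inr (gOrder_pos hε).le

theorem gfun_nonneg (hε : 0 < ε) (hx : x ∈ Icc (x0 ε) ε) : 0 ≤ gfun ε x := by
  rw [gfun_eq_rpow_mul_exp hε hx]
  exact mul_nonneg (rpow_nonneg (sub_nonneg.2 hx.1) _) (exp_pos _).le

theorem gfun_pos (hε : 0 < ε) (hx : x ∈ Ioc (x0 ε) ε) : 0 < gfun ε x := by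
  rw [gfun_eq_rpow_mul_exp hε (Ioc_subset_Icc_self hx)]
  exact mul_pos (rpow_pos_of_pos (sub_pos.2 hx.1) _) (exp_pos _)

theorem gfun_self_pos (hε : 0 < ε) : 0 < gfun ε ε := gfun_pos hε (right_mem_Ioc.2 (x0_lt_self hε))

theorem gOrder_div_sub_div (h : x - x0 ε ≠ 0) (h' : 4 * ε - x0 ε - x ≠ 0) :
    gOrder ε / (x - x0 ε) - (4 - 2 * √3) * ε / (4 * ε - x0 ε - x) =
      (8 * ε * x - 28 * ε ^ 2) / (x ^ 2 - 4 * ε * x + ε ^ 2) := by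
  have h3 : √3 ^ 2 = 3 := Real.sq_sqrt (by norm_num)
  rw [div_sub_div _ _ h h', ← x0_sub_mul_sub, ← neg_sub x (x0 ε), neg_mul, div_neg, ← neg_div]
  congr 1
  unfold gOrder x0
  linear_combination (4 * ε ^ 2) * h3

-- The right-hand side is the partial fraction decomposition of `φ₁ / φ₂`; it is `g' / g`.
theorem phi1_div_phi2_eq (hε : 0 < ε) (hx : x ∈ Ioc (x0 ε) ε) :
    phi1 ε x / phi2 ε x = gOrder ε / (x - x0 ε) + gRegularLogDeriv ε x := by
  have hx0 := x0_pos hε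
  have hx0ε := x0_lt_self hε
  obtain ⟨hlt, hle⟩ := hx
  have hnear : x0 ε - x ≠ 0 := by linarith
  have hnear' : x - x0 ε ≠ 0 := by linarith
  have hfar : 4 * ε - x0 ε - x ≠ 0 := by linarith
  have hpole : ε + x ≠ 0 := by linarith
  have hquad : x ^ 2 - 4 * ε * x + ε ^ 2 ≠ 0 := x0_sub_mul_sub ε x ▸ mul_ne_zero hnear hfar
  calc phi1 ε x / phi2 ε x
      = (8 * ε * x - 28 * ε ^ 2) / (x ^ 2 - 4 * ε * x + ε ^ 2) - 8 * ε / (ε + x) +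
          (-(24 * ε ^ 3) / (ε + x) ^ 3 - 12 * ε ^ 2 / (ε + x) ^ 2) := by
        rw [phi1_of_mem_Icc hε ⟨by linarith, hle⟩, phi2_of_le hε hle, x0_sub_mul_sub]
        generalize hQ : x ^ 2 - 4 * ε * x + ε ^ 2 = Q at hquad ⊢
        field_simp
        rw [← hQ]
        ring
    _ = gOrder ε / (x - x0 ε) + gRegularLogDeriv ε x := by
        rw [← gOrder_div_sub_div hnear' hfar, gRegularLogDeriv, add_comm x ε]
        ring

theorem hasDerivAt_gfun (hε : 0 < ε) (hx : x ∈ Ioo (x0 ε) ε) :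
    HasDerivAt (gfun ε) (gfun ε x * (phi1 ε x / phi2 ε x)) x := by
  have hnear : x - x0 ε ≠ 0 := (sub_pos.2 hx.1).ne'
  have hpow : HasDerivAt (fun y => (y - x0 ε) ^ gOrder ε)
      ((x - x0 ε) ^ gOrder ε * (gOrder ε / (x - x0 ε))) x := by
    refine (((hasDerivAt_id x).sub_const (x0 ε)).rpow_const (Or.inl hnear)).congr_deriv ?_
    rw [id, rpow_sub_one hnear]
    ring
  have hregular := (hasDerivAt_gRegularLog (ε := ε) (x := x) (by linarith [x0_pos hε, hx.1])
    (by linarith [x0_lt_self hε, hx.2])).exp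
  have hfactor : gfun ε =ᶠ[𝓝 x] fun y => (y - x0 ε) ^ gOrder ε * exp (gRegularLog ε y) := by
    filter_upwards [Ioo_mem_nhds hx.1 hx.2] with y hy
    exact gfun_eq_rpow_mul_exp hε (Ioo_subset_Icc_self hy)
  refine ((hpow.mul hregular).congr_of_eventuallyEq hfactor).congr_deriv ?_
  rw [phi1_div_phi2_eq hε (Ioo_subset_Ioc_self hx), hfactor.eq_of_nhds]
  ring

theorem pfun_of_le (hx : x ≤ ε) : pfun ε x = gfun ε x / (6 * gfun ε ε) := if_pos hx

theorem pfun_eq_edgeDist (hε : 0 < ε) (hε' : ε < 1 / 2) (x : ℝ) :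
    pfun ε x = pfun ε (edgeDist ε x) := by
  have hmid : (1 / 6 : ℝ) = pfun ε ε := by
    have := (gfun_self_pos hε).ne'
    rw [pfun_of_le le_rfl]
    field_simp
  rw [← ite_eq_comp_edgeDist (f := pfun ε) hε', ← hmid]
  grind [pfun]

theorem pfun_one_sub (hε : 0 < ε) (hε' : ε < 1 / 2) (x : ℝ) : pfun ε (1 - x) = pfun ε x := by
  rw [pfun_eq_edgeDist hε hε', edgeDist_one_sub, ← pfun_eq_edgeDist hε hε']

theorem pfun_x0 (hε : 0 < ε) : pfun ε (x0 ε) = 0 := by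
  rw [pfun_of_le (x0_lt_self hε).le, gfun_x0, zero_div]

theorem continuousOn_pfun (hε : 0 < ε) (hε' : ε < 1 / 2) :
    ContinuousOn (pfun ε) (Icc (x0 ε) (1 - x0 ε)) := by
  have hleft : ContinuousOn (pfun ε) (Icc (x0 ε) ε) :=
    ((continuousOn_gfun hε).div_const _).congr fun x hx => pfun_of_le hx.2
  exact (hleft.comp (continuous_edgeDist ε).continuousOn fun x hx => edgeDist_mem_Icc hε hx).congr
    fun x _ => pfun_eq_edgeDist hε hε' x

theorem pfun_nonneg (hε : 0 < ε) (hε' : ε < 1 / 2) (hx : x ∈ Icc (x0 ε) (1 - x0 ε)) :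
    0 ≤ pfun ε x := by
  rw [pfun_eq_edgeDist hε hε', pfun_of_le (edgeDist_le ε x)]
  exact div_nonneg (gfun_nonneg hε (edgeDist_mem_Icc hε hx))
    (mul_pos (by norm_num) (gfun_self_pos hε)).le

theorem pfun_pos (hε : 0 < ε) (hε' : ε < 1 / 2) (hx : x ∈ Ioo (x0 ε) (1 - x0 ε)) :
    0 < pfun ε x := by
  rw [pfun_eq_edgeDist hε hε', pfun_of_le (edgeDist_le ε x)]
  exact div_pos (gfun_pos hε (edgeDist_mem_Ioc hε hx)) (mul_pos (by norm_num) (gfun_self_pos hε))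

theorem hasDerivAt_pfun_of_lt (hε : 0 < ε) (hx : x ∈ Ioo (x0 ε) ε) :
    HasDerivAt (pfun ε) (pfun ε x * (phi1 ε x / phi2 ε x)) x := by
  have heq : pfun ε =ᶠ[𝓝 x] fun y => gfun ε y / (6 * gfun ε ε) := by
    filter_upwards [Iio_mem_nhds hx.2] with y hy using pfun_of_le (le_of_lt hy)
  refine (((hasDerivAt_gfun hε hx).div_const _).congr_of_eventuallyEq heq).congr_deriv ?_
  rw [pfun_of_le hx.2.le]
  ring

theorem hasDerivAt_pfun (hε : 0 < ε) (hε' : ε < 1 / 2)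
    (hx : x ∈ Ioo (x0 ε) (1 - x0 ε) \ {ε, 1 - ε}) :
    HasDerivAt (pfun ε) (pfun ε x * (phi1 ε x / phi2 ε x)) x := by
  obtain ⟨hxI, hxε⟩ := hx
  obtain ⟨hne, hne'⟩ : x ≠ ε ∧ x ≠ 1 - ε := by simpa using hxε
  rcases lt_or_gt_of_ne hne with hleft | hleft
  · exact hasDerivAt_pfun_of_lt hε ⟨hxI.1, hleft⟩
  rcases lt_or_gt_of_ne hne' with hright | hright
  · have hconst : pfun ε =ᶠ[𝓝 x] fun _ => 1 / 6 := by
      filter_upwards [Ioo_mem_nhds hleft hright] with y hy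
      rw [pfun, if_neg hy.1.not_ge, if_pos hy.2.le]
    have hphi1 : phi1 ε x = 0 := by rw [phi1, if_neg hleft.not_ge, if_pos hright.le]
    rw [hphi1, zero_div, mul_zero]
    exact (hasDerivAt_const x _).congr_of_eventuallyEq hconst
  · have hreflect := (hasDerivAt_pfun_of_lt hε (x := 1 - x)
      ⟨by linarith [hxI.2], by linarith⟩).comp_const_sub 1 x
    simp only [pfun_one_sub hε hε', phi2_one_sub hε hε', phi1_one_sub hε hε'] at hreflect
    exact hreflect.congr_deriv (by ring)

theorem wfun_one_sub (hε : 0 < ε) (hε' : ε < 1 / 2) (x : ℝ) : wfun ε (1 - x) = wfun ε x := by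
  rw [wfun, pfun_one_sub hε hε', phi2_one_sub hε hε', wfun]

theorem wfun_pos (hε : 0 < ε) (hε' : ε < 1 / 2) (hx : x ∈ Ioo (x0 ε) (1 - x0 ε)) :
    0 < wfun ε x :=
  div_pos_of_neg_of_neg (neg_neg_of_pos (pfun_pos hε hε' hx)) (phi2_neg hε hε' hx)

theorem continuousOn_wfun (hε : 0 < ε) (hε' : ε < 1 / 2) :
    ContinuousOn (wfun ε) (Ioo (x0 ε) (1 - x0 ε)) :=
  ((continuousOn_pfun hε hε').mono Ioo_subset_Icc_self).neg.div
    (continuous_phi2 hε hε').continuousOn fun _ hx => (phi2_neg hε hε' hx).ne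

theorem wfun_eq_rpow_mul (hε : 0 < ε) (hx : x ∈ Ioc (x0 ε) ε) :
    wfun ε x = (x - x0 ε) ^ (gOrder ε - 1) *
      (2 * ε ^ 2 * exp (gRegularLog ε x) / (gfun ε ε * (4 * ε - x0 ε - x))) := by
  have hnear : x - x0 ε ≠ 0 := (sub_pos.2 hx.1).ne'
  have hfar : 4 * ε - x0 ε - x ≠ 0 := by linarith [x0_lt_self hε, hx.2]
  have hg := (gfun_self_pos hε).ne'
  rw [wfun, pfun_of_le hx.2, phi2_of_le hε hx.2, gfun_eq_rpow_mul_exp hε (Ioc_subset_Icc_self hx),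
    rpow_sub_one hnear, ← neg_sub x (x0 ε)]
  field_simp
  ring

theorem intervalIntegrable_wfun_left (hε : 0 < ε) :
    IntervalIntegrable (wfun ε) volume (x0 ε) ε := by
  have hx0ε := x0_lt_self hε
  have hsing : IntervalIntegrable (fun x => (x - x0 ε) ^ (gOrder ε - 1)) volume (x0 ε) ε := by
    simpa using (intervalIntegral.intervalIntegrable_rpow' (a := 0) (b := ε - x0 ε)
      (by linarith [gOrder_pos hε] : -1 < gOrder ε - 1)).comp_sub_right (x0 ε)
  have hcont : ContinuousOn (fun x => 2 * ε ^ 2 * exp (gRegularLog ε x) /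
      (gfun ε ε * (4 * ε - x0 ε - x))) (uIcc (x0 ε) ε) := by
    rw [uIcc_of_le hx0ε.le]
    refine ((continuousOn_gRegularLog hε).rexp.const_mul (2 * ε ^ 2)).div (by fun_prop) ?_
    exact fun x hx => mul_ne_zero (gfun_self_pos hε).ne' (by linarith [hx.2])
  refine (hsing.mul_continuousOn hcont).congr fun x hx => ?_
  rw [uIoc_of_le hx0ε.le] at hx
  exact (wfun_eq_rpow_mul hε hx).symm

theorem intervalIntegrable_wfun (hε : 0 < ε) (hε' : ε < 1 / 2) :
    IntervalIntegrable (wfun ε) volume (x0 ε) (1 - x0 ε) := by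
  have hx0ε := x0_lt_self hε
  have hleft := intervalIntegrable_wfun_left hε
  have hmid : IntervalIntegrable (wfun ε) volume ε (1 - ε) :=
    ((continuousOn_wfun hε hε').mono
      (Icc_subset_Ioo hx0ε (by linarith))).intervalIntegrable_of_Icc (by linarith)
  have hright : IntervalIntegrable (wfun ε) volume (1 - ε) (1 - x0 ε) := by
    simpa only [wfun_one_sub hε hε'] using (hleft.comp_sub_left 1).symm
  exact (hleft.trans hmid).trans hright

end Coefficients

/-- `u`, with first and second derivatives `u'` and `u''`, solves the eigenvalue equation
`φ₂ u'' + φ₁ u' = lam u` on `[0, 1]`. -/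
structure IsEigenSolution (ε lam : ℝ) (u u' u'' : ℝ → ℝ) : Prop where
  hasDerivAt : ∀ x ∈ Icc 0 1, HasDerivAt u (u' x) x
  hasDerivAt' : ∀ x ∈ Icc 0 1, HasDerivAt u' (u'' x) x
  eq : ∀ x ∈ Icc 0 1, phi2 ε x * u'' x + phi1 ε x * u' x = lam * u x

namespace IsEigenSolution

variable {ε lam : ℝ} {u u' u'' : ℝ → ℝ}

theorem continuousOn (h : IsEigenSolution ε lam u u' u'') : ContinuousOn u (Icc 0 1) :=
  fun x hx => (h.hasDerivAt x hx).continuousAt.continuousWithinAt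

theorem continuousOn' (h : IsEigenSolution ε lam u u' u'') : ContinuousOn u' (Icc 0 1) :=
  fun x hx => (h.hasDerivAt' x hx).continuousAt.continuousWithinAt

theorem comp_one_sub (hε : 0 < ε) (hε' : ε < 1 / 2) (h : IsEigenSolution ε lam u u' u'') :
    IsEigenSolution ε lam (fun x => u (1 - x)) (fun x => -u' (1 - x)) (fun x => u'' (1 - x)) where
  hasDerivAt x hx := (h.hasDerivAt (1 - x) (Icc.mem_iff_one_sub_mem.1 hx)).comp_const_sub 1 x
  hasDerivAt' x hx :=
    ((h.hasDerivAt' (1 - x) (Icc.mem_iff_one_sub_mem.1 hx)).comp_const_sub 1 x).neg.congr_deriv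
      (neg_neg _)
  eq x hx := by
    have heq := h.eq (1 - x) (Icc.mem_iff_one_sub_mem.1 hx)
    rw [phi2_one_sub hε hε', phi1_one_sub hε hε'] at heq
    linarith

theorem sub_const (h : IsEigenSolution ε 0 u u' u'') (c : ℝ) :
    IsEigenSolution ε 0 (fun x => u x - c) u' u'' where
  hasDerivAt x hx := (h.hasDerivAt x hx).sub_const c
  hasDerivAt' := h.hasDerivAt'
  eq x hx := by simpa only [zero_mul] using h.eq x hx

theorem hasDerivAt_pfun_mul (hε : 0 < ε) (hε' : ε < 1 / 2) (h : IsEigenSolution ε lam u u' u'')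
    {x : ℝ} (hx : x ∈ Ioo (x0 ε) (1 - x0 ε) \ {ε, 1 - ε}) :
    HasDerivAt (fun y => pfun ε y * u' y) (-(lam * (wfun ε x * u x))) x := by
  have hx1 := Icc_x0_subset_Icc hε (Ioo_subset_Icc_self hx.1)
  have hphi2 := (phi2_neg hε hε' hx.1).ne
  refine ((hasDerivAt_pfun hε hε' hx).mul (h.hasDerivAt' x hx1)).congr_deriv ?_
  rw [wfun]
  field_simp
  linear_combination pfun ε x * h.eq x hx1

theorem integral_pfun_mul_sq (hε : 0 < ε) (hε' : ε < 1 / 2) (h : IsEigenSolution ε lam u u' u'') :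
    ∫ x in (x0 ε)..(1 - x0 ε), pfun ε x * u' x ^ 2 =
      lam * ∫ x in (x0 ε)..(1 - x0 ε), wfun ε x * u x ^ 2 := by
  have hsub := Icc_x0_subset_Icc hε
  exact integral_mul_deriv_sq_eq_of_sturmLiouville (by linarith [x0_lt_self hε])
    (Set.toFinite {ε, 1 - ε}).countable (continuousOn_pfun hε hε') (pfun_x0 hε)
    (by rw [pfun_one_sub hε hε', pfun_x0 hε]) (intervalIntegrable_wfun hε hε')
    (h.continuousOn.mono hsub) (h.continuousOn'.mono hsub)
    (fun x hx => h.hasDerivAt x (hsub (Ioo_subset_Icc_self hx)))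
    fun x hx => h.hasDerivAt_pfun_mul hε hε' hx

theorem deriv_eqOn_zero_of_eqOn_Ioo (hε : 0 < ε) (h : IsEigenSolution ε lam u u' u'')
    (hu : EqOn u 0 (Ioo (x0 ε) (1 - x0 ε))) : EqOn u' 0 (Ioo (x0 ε) (1 - x0 ε)) := by
  intro x hx
  have hzero : u =ᶠ[𝓝 x] fun _ => 0 := hu.eventuallyEq_of_mem (Ioo_mem_nhds hx.1 hx.2)
  exact (h.hasDerivAt x (Icc_x0_subset_Icc hε (Ioo_subset_Icc_self hx))).unique
    ((hasDerivAt_const x 0).congr_of_eventuallyEq hzero)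

/- In the variable `t = x₀ - x`, multiplying by `t / φ₂` puts the equation into the form
`t v'' + c v' = k v`; the damping `c` is nonnegative because `φ₁ ≤ 0` on `[0, ε]`. -/
theorem eqOn_zero_of_x0 (hε : 0 < ε) (hε' : ε < 1 / 2) (h : IsEigenSolution ε lam u u' u'')
    (hu : u (x0 ε) = 0) (hu' : u' (x0 ε) = 0) : EqOn u 0 (Icc 0 (x0 ε)) := by
  have hx0ε := x0_lt_self hε
  have hmaps : MapsTo (fun t => x0 ε - t) (Icc 0 (x0 ε)) (Icc 0 1) :=
    fun t ht => ⟨sub_nonneg.2 ht.2, by linarith [ht.1]⟩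
  have hcont : Continuous fun t => x0 ε - t := by fun_prop
  have hphi2 : ∀ t ∈ Ioo 0 (x0 ε), 0 < phi2 ε (x0 ε - t) :=
    fun t ht => phi2_pos hε (sub_lt_self _ ht.1)
  have hratio : ∀ t ∈ Ioo 0 (x0 ε), 0 ≤ t / phi2 ε (x0 ε - t) :=
    fun t ht => div_nonneg ht.1.le (hphi2 t ht).le
  have hvanish : EqOn (fun t => u (x0 ε - t)) 0 (Icc 0 (x0 ε)) := by
    refine eqOn_zero_of_singular_ode (v' := fun t => -u' (x0 ε - t))
      (v'' := fun t => u'' (x0 ε - t)) (L := |lam| * (6 * ε))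
      (c := fun t => -phi1 ε (x0 ε - t) * (t / phi2 ε (x0 ε - t)))
      (k := fun t => lam * (t / phi2 ε (x0 ε - t))) (x0_pos hε)
      (h.continuousOn.comp hcont.continuousOn hmaps)
      (h.continuousOn'.comp hcont.continuousOn hmaps).neg
      (fun t ht => (h.hasDerivAt _ (hmaps (Ioo_subset_Icc_self ht))).comp_const_sub _ t)
      (fun t ht => ((h.hasDerivAt' _ (hmaps (Ioo_subset_Icc_self ht))).comp_const_sub _
        t).neg.congr_deriv (neg_neg _)) ?_ ?_ ?_ (by simpa using hu) (by simpa using hu')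
    · exact fun t ht => mul_nonneg (neg_nonneg.2 (phi1_nonpos hε
        ⟨sub_nonneg.2 ht.2.le, by linarith [ht.1]⟩)) (hratio t ht)
    · intro t ht
      rw [abs_mul, abs_of_nonneg (hratio t ht)]
      gcongr
      rw [div_le_iff₀ (hphi2 t ht)]
      simpa using x0_sub_le_mul_phi2 hε (sub_le_self _ ht.1.le : x0 ε - t ≤ x0 ε)
    · intro t ht
      have := (hphi2 t ht).ne'
      field_simp
      linear_combination t * h.eq _ (hmaps (Ioo_subset_Icc_self ht))
  intro x hx
  simpa using hvanish (x := x0 ε - x) ⟨sub_nonneg.2 hx.2, sub_le_self _ hx.1⟩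

theorem eqOn_zero_left_of_eqOn_Ioo (hε : 0 < ε) (hε' : ε < 1 / 2)
    (h : IsEigenSolution ε lam u u' u'') (hu : EqOn u 0 (Ioo (x0 ε) (1 - x0 ε))) :
    EqOn u 0 (Icc 0 (x0 ε)) := by
  have hx0ε := x0_lt_self hε
  have hlt : x0 ε < 1 - x0 ε := by linarith
  have hextend : ∀ f : ℝ → ℝ, ContinuousOn f (Icc 0 1) → EqOn f 0 (Ioo (x0 ε) (1 - x0 ε)) →
      f (x0 ε) = 0 := fun f hf hzero =>
    hzero.of_subset_closure (hf.mono (Icc_x0_subset_Icc hε)) continuousOn_const Ioo_subset_Icc_self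
      (closure_Ioo hlt.ne).ge (left_mem_Icc.2 hlt.le)
  exact h.eqOn_zero_of_x0 hε hε' (hextend u h.continuousOn hu)
    (hextend u' h.continuousOn' (h.deriv_eqOn_zero_of_eqOn_Ioo hε hu))

theorem eqOn_zero_of_eqOn_Ioo (hε : 0 < ε) (hε' : ε < 1 / 2) (h : IsEigenSolution ε lam u u' u'')
    (hu : EqOn u 0 (Ioo (x0 ε) (1 - x0 ε))) : EqOn u 0 (Icc 0 1) := by
  intro x hx
  rcases le_or_gt x (x0 ε) with hleft | hleft
  · exact h.eqOn_zero_left_of_eqOn_Ioo hε hε' hu ⟨hx.1, hleft⟩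
  rcases lt_or_ge x (1 - x0 ε) with hright | hright
  · exact hu ⟨hleft, hright⟩
  · have hreflect := (h.comp_one_sub hε hε').eqOn_zero_left_of_eqOn_Ioo hε hε'
      fun y hy => hu ⟨by linarith [hy.2], by linarith [hy.1]⟩
    simpa using hreflect (x := 1 - x) ⟨sub_nonneg.2 hx.2, by linarith⟩

theorem integral_wfun_mul_sq_pos (hε : 0 < ε) (hε' : ε < 1 / 2)
    (h : IsEigenSolution ε lam u u' u'') (hne : ∃ x ∈ Icc 0 1, u x ≠ 0) :
    0 < ∫ x in (x0 ε)..(1 - x0 ε), wfun ε x * u x ^ 2 := by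
  obtain ⟨z, hz, huz⟩ : ∃ z ∈ Ioo (x0 ε) (1 - x0 ε), u z ≠ 0 := by
    contrapose! hne
    exact h.eqOn_zero_of_eqOn_Ioo hε hε' hne
  have hu := h.continuousOn.mono (Icc_x0_subset_Icc hε)
  have hle : x0 ε ≤ 1 - x0 ε := by linarith [x0_lt_self hε]
  exact intervalIntegral_pos_of_continuousOn_Ioo hz
    ((continuousOn_wfun hε hε').mul ((hu.mono Ioo_subset_Icc_self).pow 2))
    ((intervalIntegrable_wfun hε hε').mul_continuousOn (by rw [uIcc_of_le hle]; exact hu.pow 2))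
    (fun x hx => mul_nonneg (wfun_pos hε hε' hx).le (sq_nonneg _))
    (mul_ne_zero (wfun_pos hε hε' hz).ne' (pow_ne_zero 2 huz))

theorem eq_integral_div_integral (hε : 0 < ε) (hε' : ε < 1 / 2)
    (h : IsEigenSolution ε lam u u' u'') (hne : ∃ x ∈ Icc 0 1, u x ≠ 0) :
    lam = (∫ x in (x0 ε)..(1 - x0 ε), pfun ε x * u' x ^ 2) /
      ∫ x in (x0 ε)..(1 - x0 ε), wfun ε x * u x ^ 2 :=
  (eq_div_iff (h.integral_wfun_mul_sq_pos hε hε' hne).ne').2 (h.integral_pfun_mul_sq hε hε').symm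

theorem eigenvalue_nonneg (hε : 0 < ε) (hε' : ε < 1 / 2) (h : IsEigenSolution ε lam u u' u'')
    (hne : ∃ x ∈ Icc 0 1, u x ≠ 0) : 0 ≤ lam := by
  rw [h.eq_integral_div_integral hε hε' hne]
  refine div_nonneg ?_ (h.integral_wfun_mul_sq_pos hε hε' hne).le
  exact intervalIntegral.integral_nonneg (by linarith [x0_lt_self hε])
    fun x hx => mul_nonneg (pfun_nonneg hε hε' hx) (sq_nonneg _)

theorem deriv_eqOn_zero (hε : 0 < ε) (hε' : ε < 1 / 2) (h : IsEigenSolution ε 0 u u' u'') :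
    EqOn u' 0 (Ioo (x0 ε) (1 - x0 ε)) := by
  intro z hz
  by_contra huz
  have hu' := h.continuousOn'.mono (Icc_x0_subset_Icc hε)
  have hcont := (continuousOn_pfun hε hε').mul (hu'.pow 2)
  have henergy : 0 < ∫ x in (x0 ε)..(1 - x0 ε), pfun ε x * u' x ^ 2 :=
    intervalIntegral_pos_of_continuousOn_Ioo hz (hcont.mono Ioo_subset_Icc_self)
      (hcont.intervalIntegrable_of_Icc (by linarith [x0_lt_self hε]))
      (fun x hx => mul_nonneg (pfun_pos hε hε' hx).le (sq_nonneg _))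
      (mul_ne_zero (pfun_pos hε hε' hz).ne' (pow_ne_zero 2 huz))
  exact henergy.ne' (by rw [h.integral_pfun_mul_sq hε hε', zero_mul])

theorem apply_eq_apply (hε : 0 < ε) (hε' : ε < 1 / 2) (h : IsEigenSolution ε 0 u u' u'')
    {x y : ℝ} (hx : x ∈ Icc 0 1) (hy : y ∈ Icc 0 1) : u x = u y := by
  have hx0ε := x0_lt_self hε
  have hderiv : ∀ z ∈ Ioo (x0 ε) (1 - x0 ε), HasDerivAt u 0 z := fun z hz => by
    simpa only [h.deriv_eqOn_zero hε hε' hz, Pi.zero_apply] using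
      h.hasDerivAt z (Icc_x0_subset_Icc hε (Ioo_subset_Icc_self hz))
  have hconst : EqOn (fun z => u z - u (1 / 2)) 0 (Ioo (x0 ε) (1 - x0 ε)) := fun z hz =>
    sub_eq_zero.2 <| isOpen_Ioo.is_const_of_deriv_eq_zero isPreconnected_Ioo
      (fun y hy => (hderiv y hy).differentiableAt.differentiableWithinAt)
      (fun y hy => (hderiv y hy).deriv) hz ⟨by linarith, by linarith⟩
  have hzero := (h.sub_const (u (1 / 2))).eqOn_zero_of_eqOn_Ioo hε hε' hconst
  exact (sub_eq_zero.1 (hzero hx)).trans (sub_eq_zero.1 (hzero hy)).symm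

end IsEigenSolution

theorem stmt8_general {ε : ℝ} (hε : 0 < ε) (hε' : ε < 1 / 2) :
    (∀ (lam : ℝ) (u u' u'' : ℝ → ℝ),
      (∀ x ∈ Icc (0 : ℝ) 1, HasDerivAt u (u' x) x) →
      (∀ x ∈ Icc (0 : ℝ) 1, HasDerivAt u' (u'' x) x) →
      (∀ x ∈ Icc (0 : ℝ) 1, phi2 ε x * u'' x + phi1 ε x * u' x = lam * u x) →
      (∃ x ∈ Icc (0 : ℝ) 1, u x ≠ 0) →
      (0 < ∫ x in (x0 ε)..(1 - x0 ε), wfun ε x * (u x) ^ 2) ∧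
        lam = (∫ x in (x0 ε)..(1 - x0 ε), pfun ε x * (u' x) ^ 2) /
              (∫ x in (x0 ε)..(1 - x0 ε), wfun ε x * (u x) ^ 2) ∧
        0 ≤ lam) ∧
    (∃ u u' u'' : ℝ → ℝ,
      (∀ x ∈ Icc (0 : ℝ) 1, HasDerivAt u (u' x) x) ∧
      (∀ x ∈ Icc (0 : ℝ) 1, HasDerivAt u' (u'' x) x) ∧
      ContinuousOn u'' (Icc 0 1) ∧
      (∀ x ∈ Icc (0 : ℝ) 1, phi2 ε x * u'' x + phi1 ε x * u' x = 0) ∧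
      (∃ x ∈ Icc (0 : ℝ) 1, u x ≠ 0)) ∧
    (∀ (u u' u'' : ℝ → ℝ),
      (∀ x ∈ Icc (0 : ℝ) 1, HasDerivAt u (u' x) x) →
      (∀ x ∈ Icc (0 : ℝ) 1, HasDerivAt u' (u'' x) x) →
      (∀ x ∈ Icc (0 : ℝ) 1, phi2 ε x * u'' x + phi1 ε x * u' x = 0) →
      ∀ x ∈ Icc (0 : ℝ) 1, ∀ y ∈ Icc (0 : ℝ) 1, u x = u y) := by
  refine ⟨fun lam u u' u'' hu hu' heq hne => ?_,
    ⟨1, 0, 0, fun x _ => hasDerivAt_const x 1, fun x _ => hasDerivAt_const x 0, continuousOn_const,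
      by simp, 0, by simp⟩,
    fun u u' u'' hu hu' heq x hx y hy => ?_⟩
  · have h : IsEigenSolution ε lam u u' u'' := ⟨hu, hu', heq⟩
    exact ⟨h.integral_wfun_mul_sq_pos hε hε' hne, h.eq_integral_div_integral hε hε' hne,
      h.eigenvalue_nonneg hε hε' hne⟩
  · have h : IsEigenSolution ε 0 u u' u'' := ⟨hu, hu', by simpa only [zero_mul] using heq⟩
    exact h.apply_eq_apply hε hε' hx hy

theorem stmt8 :
    ∃ ε₀ > (0:ℝ), ∀ ε : ℝ, 0 < ε → ε ≤ ε₀ →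
      (∀ (lam : ℝ) (u u' u'' : ℝ → ℝ),
        (∀ x ∈ Icc (0:ℝ) 1, HasDerivAt u (u' x) x) →
        (∀ x ∈ Icc (0:ℝ) 1, HasDerivAt u' (u'' x) x) →
        ContinuousOn u'' (Icc 0 1) →
        (∀ x ∈ Icc (0:ℝ) 1, phi2 ε x * u'' x + phi1 ε x * u' x = lam * u x) →
        (∃ x ∈ Icc (0:ℝ) 1, u x ≠ 0) →
        (0 < ∫ x in (x0 ε)..(1 - x0 ε), wfun ε x * (u x)^2) ∧
          lam = (∫ x in (x0 ε)..(1 - x0 ε), pfun ε x * (u' x)^2) /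
                (∫ x in (x0 ε)..(1 - x0 ε), wfun ε x * (u x)^2) ∧
          0 ≤ lam) ∧
      (∃ u u' u'' : ℝ → ℝ,
        (∀ x ∈ Icc (0:ℝ) 1, HasDerivAt u (u' x) x) ∧
        (∀ x ∈ Icc (0:ℝ) 1, HasDerivAt u' (u'' x) x) ∧
        ContinuousOn u'' (Icc 0 1) ∧
        (∀ x ∈ Icc (0:ℝ) 1, phi2 ε x * u'' x + phi1 ε x * u' x = 0) ∧
        (∃ x ∈ Icc (0:ℝ) 1, u x ≠ 0)) ∧
      (∀ (u u' u'' : ℝ → ℝ),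
        (∀ x ∈ Icc (0:ℝ) 1, HasDerivAt u (u' x) x) →
        (∀ x ∈ Icc (0:ℝ) 1, HasDerivAt u' (u'' x) x) →
        ContinuousOn u'' (Icc 0 1) →
        (∀ x ∈ Icc (0:ℝ) 1, phi2 ε x * u'' x + phi1 ε x * u' x = 0) →
        ∀ x ∈ Icc (0:ℝ) 1, ∀ y ∈ Icc (0:ℝ) 1, u x = u y) := by
  refine ⟨1 / 4, by norm_num, fun ε hε hle => ?_⟩
  obtain ⟨heigen, hzero, hconst⟩ := stmt8_general hε (by linarith)
  exact ⟨fun lam u u' u'' hu hu' _ => heigen lam u u' u'' hu hu', hzero,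
    fun u u' u'' hu hu' _ => hconst u u' u'' hu hu'⟩
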